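/- There exists a constant C > 0 depending only on n such that, for every abstract Monge–Ampère pairing setup (W, B, 𝟙, F) as in the context and all φ₁, φ₂, φ₃ ∈ F: I(φ₁, φ₃) ≤ C · max{I(φ₁, φ₂), I(φ₂, φ₃)} (a quasi-triangle inequality for I). -/

import Mathlib

open Finset

/-- Abstract Monge–Ampère pairing setup with `n = m + 1`: a symmetric multilinear
form `B` on `W^(n+1) = W^(m+2)`, a unit element `one`, and a nonempty convex set
`F ⊆ W`, satisfying (i) normalization `B(𝟙, φ₁, …, φₙ) = 1`, (ii) integration by
parts `B(u, 𝟙, g₂, …, gₙ) = 0` for `u ∈ W₀` and `gᵢ ∈ W' = span (F ∪ {𝟙})`, and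
(iii) the Cauchy–Schwarz / local Hodge index inequality
`B(u, u, φ₁, …, φ_{n-1}) ≤ 0` for `u ∈ W₀`. -/
structure MASetup (m : ℕ) (W : Type*) [AddCommGroup W] [Module ℝ W] where
  B : MultilinearMap ℝ (fun _ : Fin (m + 2) => W) ℝ
  symm : ∀ (v : Fin (m + 2) → W) (σ : Equiv.Perm (Fin (m + 2))), B (v ∘ σ) = B v
  one : W
  F : Set W
  Fne : F.Nonempty
  Fconv : Convex ℝ F
  unital : ∀ g : Fin (m + 1) → W, (∀ i, g i ∈ F) → B (Fin.cons one g) = 1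
  parts : ∀ u ∈ Submodule.span ℝ ({x | ∃ φ ∈ F, ∃ ψ ∈ F, x = φ - ψ} ∪ {one}),
      ∀ g : Fin m → W, (∀ i, g i ∈ Submodule.span ℝ (F ∪ {one})) →
        B (Fin.cons u (Fin.cons one g)) = 0
  hodge : ∀ u ∈ Submodule.span ℝ ({x | ∃ φ ∈ F, ∃ ψ ∈ F, x = φ - ψ} ∪ {one}),
      ∀ g : Fin m → W, (∀ i, g i ∈ F) → B (Fin.cons u (Fin.cons u g)) ≤ 0

namespace MASetup

variable {m : ℕ} {W : Type*} [AddCommGroup W] [Module ℝ W]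

/-- The vector with `j` copies of `φ` followed by copies of `ψ`. -/
def mixVec (φ ψ : W) (j : ℕ) {k : ℕ} : Fin k → W := fun i => if (i : ℕ) < j then φ else ψ

/-- The linear span `W₀` of the differences of elements of `F` together with `one`. -/
def W0 (S : MASetup m W) : Submodule ℝ W :=
  Submodule.span ℝ ({x | ∃ φ ∈ S.F, ∃ ψ ∈ S.F, x = φ - ψ} ∪ {S.one})

/-- The Monge–Ampère energy
`E(φ, ψ) = (n+1)⁻¹ ∑_{j=0}^{n} B(φ-ψ, φ, …, φ, ψ, …, ψ)` with `j` copies of `φ`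
and `n - j` copies of `ψ` among the last `n` arguments. -/
noncomputable def energy (S : MASetup m W) (φ ψ : W) : ℝ :=
  ((m : ℝ) + 2)⁻¹ * ∑ j ∈ Finset.range (m + 2), S.B (Fin.cons (φ - ψ) (mixVec φ ψ j))

/-- The functional `I(φ, ψ) = B(φ-ψ, ψ, …, ψ) - B(φ-ψ, φ, …, φ)`. -/
noncomputable def Ifun (S : MASetup m W) (φ ψ : W) : ℝ :=
  S.B (Fin.cons (φ - ψ) fun _ => ψ) - S.B (Fin.cons (φ - ψ) fun _ => φ)

/-- The functional `J_ψ(φ) = B(φ-ψ, ψ, …, ψ) - E(φ, ψ)`. -/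
noncomputable def Jfun (S : MASetup m W) (ψ φ : W) : ℝ :=
  S.B (Fin.cons (φ - ψ) fun _ => ψ) - S.energy φ ψ

end MASetup

/-!
For a tuple `g` let `q_g(u, v) = -B(u, v, g)`, a symmetric bilinear form that is positive
semidefinite on differences by the Hodge inequality. Telescoping gives
`q_g(a-b, a-b) ≤ I(a, b) ≤ n max_h q_h(a-b, a-b)`, where `g` and `h` have all entries in `{a, b}`.

Now let `g` range over the tuples with entries in `{a, b, c}`, and let `T` be the largest of the
values `q_g(a-b, a-b)` and `q_g(b-c, b-c)`; by symmetry, say `T = q_g(a-b, a-b)`. Exchange an entry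
`c` of `g` for `a` or `b` by writing `c = b - (b-c)` and moving `b-c` into the bilinear slot; the
Cauchy–Schwarz inequality bounds the square of the old value by `9T` times the new one. After at
most `n - 1` exchanges no `c` is left, so `T ^ N * 9T ≤ (9T) ^ N * I(a, b)` with `N = 2 ^ (n-1)`,
hence `T ≤ 9 ^ N * max (I(a, b)) (I(b, c))`. The parallelogram identity for `a-c = (a-b) + (b-c)`
transfers this bound to `q_g(a-c, a-c)`, and thus to `I(a, c)`.
-/

theorem piecewise_const_eq_or {ι α : Type*} (s : Finset ι) [∀ i, Decidable (i ∈ s)] (x y : α)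
    (i : ι) : s.piecewise (fun _ => x) (fun _ => y) i = x ∨
      s.piecewise (fun _ => x) (fun _ => y) i = y := by
  by_cases hi : i ∈ s <;> simp [hi]

theorem update_apply_mem {ι α : Type*} [DecidableEq ι] {F : Set α} {g : ι → α}
    (hg : ∀ i, g i ∈ F) {x : α} (hx : x ∈ F) (i j : ι) : Function.update g i x j ∈ F :=
  (Function.forall_update_iff g fun _ y => y ∈ F).2 ⟨hx, fun k _ => hg k⟩ j

theorem le_pow_mul_of_pow_mul_le {R : Type*} [CommRing R] [LinearOrder R] [IsStrictOrderedRing R]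
    {T M K : R} {N : ℕ} (hT : 0 ≤ T) (hM : 0 ≤ M) (hK : 1 ≤ K)
    (h : T ^ N * (K * T) ≤ (K * T) ^ N * M) : T ≤ K ^ N * M := by
  obtain rfl | hT := hT.eq_or_lt
  · positivity
  · have h_cancel : K * T ≤ K ^ N * M :=
      le_of_mul_le_mul_left (by rwa [mul_pow, mul_right_comm, mul_comm (K ^ N * M)] at h)
        (pow_pos hT N)
    exact (le_mul_of_one_le_left hT.le hK).trans h_cancel

section PermInvariant

variable {α β : Type*} {n : ℕ}

/-- A function of finitely many variables of the same type is permutation invariant if its value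
does not depend on the order of the variables. -/
def IsPermInvariant {ι : Type*} (f : (ι → α) → β) : Prop :=
  ∀ (v : ι → α) (σ : Equiv.Perm ι), f (v ∘ σ) = f v

namespace IsPermInvariant

variable {f : (Fin (n + 1) → α) → β}

theorem comp_cons (hf : IsPermInvariant f) (u : α) :
    IsPermInvariant fun g : Fin n → α => f (Fin.cons u g) := by
  intro g σ
  change f (Fin.cons u (g ∘ σ)) = f (Fin.cons u g)
  rw [← hf (Fin.cons u g) (Equiv.Perm.decomposeFin.symm (0, σ))]
  congr 1
  ext j
  cases j using Fin.cases <;> simp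

theorem apply_insertNth (hf : IsPermInvariant f) (i : Fin (n + 1)) (x : α) (g : Fin n → α) :
    f (i.insertNth x g) = f (Fin.cons x g) := by
  rw [← Fin.cons_comp_cycleRange, hf]

theorem apply_cons_update_comm (hf : IsPermInvariant f) (x y : α) (g : Fin n → α) (i : Fin n) :
    f (Fin.cons x (Function.update g i y)) = f (Fin.cons y (Function.update g i x)) := by
  rw [← hf (Fin.cons x (Function.update g i y)) (Equiv.swap 0 i.succ)]
  congr 1
  ext j
  cases j using Fin.cases with
  | zero => simp
  | succ j =>
    obtain rfl | hji := eq_or_ne j i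
    · simp [-Fin.cons_update]
    · simp [Equiv.swap_apply_of_ne_of_ne (Fin.succ_ne_zero j) (Fin.succ_injective n |>.ne hji), hji]

end IsPermInvariant

end PermInvariant

section Pairing

variable {R W : Type*} [CommRing R] [AddCommGroup W] [Module R W] {m : ℕ}

/-- The bilinear form `(u, v) ↦ -B(u, v, g₁, …, gₘ)`, which models the mixed Dirichlet form
`∫ du ∧ dᶜv ∧ ddᶜg₁ ∧ ⋯ ∧ ddᶜgₘ`. -/
def dirichlet (B : MultilinearMap R (fun _ : Fin (m + 2) => W) R) (g : Fin m → W) :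
    LinearMap.BilinForm R W :=
  -LinearMap.mk₂ R (fun u v => B (Fin.cons u (Fin.cons v g)))
    (fun u v w => B.cons_add (Fin.cons w g) u v)
    (fun t u v => B.cons_smul (Fin.cons v g) t u)
    (fun u v w => (B.curryLeft u).cons_add g v w)
    (fun t u v => (B.curryLeft u).cons_smul g t v)

/-- The functional `I(φ, ψ) = B(φ-ψ, ψ, …, ψ) - B(φ-ψ, φ, …, φ)` of an arbitrary multilinear
form. -/
def aubinI (B : MultilinearMap R (fun _ : Fin (m + 2) => W) R) (φ ψ : W) : R :=
  B (Fin.cons (φ - ψ) fun _ => ψ) - B (Fin.cons (φ - ψ) fun _ => φ)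

/-- The pairing of `φ - ψ` with the tuple that is `φ` at the positions in `s` and `ψ` elsewhere;
it interpolates between the two terms of `aubinI`. -/
def mixedPairing (B : MultilinearMap R (fun _ : Fin (m + 2) => W) R) (φ ψ : W)
    (s : Finset (Fin (m + 1))) : R :=
  B (Fin.cons (φ - ψ) (s.piecewise (fun _ => φ) fun _ => ψ))

variable {B : MultilinearMap R (fun _ : Fin (m + 2) => W) R}

@[simp]
theorem dirichlet_apply (g : Fin m → W) (u v : W) :
    dirichlet B g u v = -B (Fin.cons u (Fin.cons v g)) :=
  rfl

theorem dirichlet_update_sub (g : Fin m → W) (i : Fin m) (x y u v : W) :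
    dirichlet B (Function.update g i (x - y)) u v =
      dirichlet B (Function.update g i x) u v - dirichlet B (Function.update g i y) u v := by
  simp only [dirichlet_apply, Fin.cons_update, MultilinearMap.map_update_sub]
  ring

theorem dirichlet_sub_comm (g : Fin m → W) (φ ψ : W) :
    dirichlet B g (φ - ψ) (φ - ψ) = dirichlet B g (ψ - φ) (ψ - φ) := by
  rw [← neg_sub ψ φ, LinearMap.BilinForm.neg_left, LinearMap.BilinForm.neg_right, neg_neg]

theorem dirichlet_isSymm (hB : IsPermInvariant B) (g : Fin m → W) : (dirichlet B g).IsSymm :=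
  ⟨fun u v => by
    simpa using (hB.apply_cons_update_comm u v (Fin.cons v g) 0)⟩

theorem dirichlet_update_comm (hB : IsPermInvariant B) (g : Fin m → W) (i : Fin m) (u v w : W) :
    dirichlet B (Function.update g i w) u v = dirichlet B (Function.update g i v) u w :=
  congrArg Neg.neg ((hB.comp_cons u).apply_cons_update_comm v w g i)

theorem apply_cons_update (hB : IsPermInvariant B) (u x : W) (h : Fin (m + 1) → W)
    (i : Fin (m + 1)) :
    B (Fin.cons u (Function.update h i x)) = -dirichlet B (i.removeNth h) u x := by
  rw [dirichlet_apply, neg_neg, ← Fin.insertNth_removeNth]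
  exact (hB.comp_cons u).apply_insertNth i x (i.removeNth h)

theorem dirichlet_update_third (hB : IsPermInvariant B) (g : Fin m → W) (i : Fin m) (a b c : W) :
    dirichlet B (Function.update g i c) (a - b) (a - b) =
      dirichlet B (Function.update g i b) (a - b) (a - b)
        - dirichlet B (Function.update g i a) (a - b) (b - c)
        + dirichlet B (Function.update g i b) (a - b) (b - c) := by
  have h_replace := dirichlet_update_sub (B := B) g i b c (a - b) (a - b)
  rw [dirichlet_update_comm hB, dirichlet_update_sub] at h_replace
  linear_combination h_replace

theorem aubinI_comm (φ ψ : W) : aubinI B φ ψ = aubinI B ψ φ := by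
  have h_neg (h : Fin (m + 1) → W) : B (Fin.cons (φ - ψ) h) = -B (Fin.cons (ψ - φ) h) := by
    simpa using B.cons_smul h (-1) (ψ - φ)
  simp only [aubinI, h_neg]
  ring

theorem aubinI_eq_mixedPairing_sub (φ ψ : W) :
    aubinI B φ ψ = mixedPairing B φ ψ ∅ - mixedPairing B φ ψ univ := by
  simp [aubinI, mixedPairing]

theorem mixedPairing_sub_insert (hB : IsPermInvariant B) (φ ψ : W) {s : Finset (Fin (m + 1))}
    {i : Fin (m + 1)} (hi : i ∉ s) :
    mixedPairing B φ ψ s - mixedPairing B φ ψ (insert i s) =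
      dirichlet B (i.removeNth (s.piecewise (fun _ => φ) fun _ => ψ)) (φ - ψ) (φ - ψ) := by
  have h_self : s.piecewise (fun _ => φ) (fun _ => ψ) =
      Function.update (s.piecewise (fun _ => φ) fun _ => ψ) i ψ := by
    simp [hi]
  rw [mixedPairing, mixedPairing, piecewise_insert, apply_cons_update hB]
  nth_rw 1 [h_self]
  rw [apply_cons_update hB, map_sub (dirichlet B _ (φ - ψ))]
  ring

end Pairing

section HodgeForm

variable {R W : Type*} [CommRing R] [LinearOrder R] [AddCommGroup W] [Module R W] {m : ℕ}

/-- A permutation-invariant multilinear form satisfying the local Hodge index inequality on the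
span of the differences of elements of `F`. -/
structure IsHodgeForm (B : MultilinearMap R (fun _ : Fin (m + 2) => W) R) (F : Set W) : Prop where
  isPermInvariant : IsPermInvariant B
  apply_cons_cons_nonpos : ∀ u ∈ vectorSpan R F, ∀ g : Fin m → W, (∀ i, g i ∈ F) →
    B (Fin.cons u (Fin.cons u g)) ≤ 0

namespace IsHodgeForm

variable {B : MultilinearMap R (fun _ : Fin (m + 2) => W) R} {F : Set W} {a b c : W} {T : R}

theorem mono {G : Set W} (hB : IsHodgeForm B F) (hGF : G ⊆ F) : IsHodgeForm B G where
  isPermInvariant := hB.isPermInvariant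
  apply_cons_cons_nonpos u hu g hg :=
    hB.apply_cons_cons_nonpos u (vectorSpan_mono R hGF hu) g fun i => hGF (hg i)

variable [IsStrictOrderedRing R]

theorem dirichlet_self_nonneg (hB : IsHodgeForm B F) {g : Fin m → W} (hg : ∀ i, g i ∈ F) {u : W}
    (hu : u ∈ vectorSpan R F) : 0 ≤ dirichlet B g u u :=
  neg_nonneg.2 (hB.apply_cons_cons_nonpos u hu g hg)

theorem sq_dirichlet_le (hB : IsHodgeForm B F) {g : Fin m → W} (hg : ∀ i, g i ∈ F) {u v : W}
    (hu : u ∈ vectorSpan R F) (hv : v ∈ vectorSpan R F) :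
    dirichlet B g u v ^ 2 ≤ dirichlet B g u u * dirichlet B g v v := by
  let D := (dirichlet B g).restrict (vectorSpan R F)
  have hD_symm : LinearMap.IsSymm D := ⟨fun x y => (dirichlet_isSymm hB.isPermInvariant g).eq x y⟩
  exact LinearMap.BilinForm.apply_sq_le_of_symm D
    (fun x => hB.dirichlet_self_nonneg hg x.2) hD_symm ⟨u, hu⟩ ⟨v, hv⟩

theorem dirichlet_add_self_le (hB : IsHodgeForm B F) {g : Fin m → W} (hg : ∀ i, g i ∈ F) {u v : W}
    (hu : u ∈ vectorSpan R F) (hv : v ∈ vectorSpan R F) :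
    dirichlet B g (u + v) (u + v) ≤ 2 * (dirichlet B g u u + dirichlet B g v v) := by
  have h_parallelogram : dirichlet B g (u + v) (u + v) + dirichlet B g (u - v) (u - v) =
      2 * (dirichlet B g u u + dirichlet B g v v) := by
    simp only [map_add, map_sub, LinearMap.add_apply, LinearMap.sub_apply]
    ring
  linarith [hB.dirichlet_self_nonneg hg (Submodule.sub_mem _ hu hv)]

theorem antitone_mixedPairing (hB : IsHodgeForm B F) (ha : a ∈ F) (hb : b ∈ F) :
    Antitone (mixedPairing B a b) := by
  refine antitone_iff_forall_insert_le.2 fun s i hi => sub_nonneg.1 ?_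
  rw [mixedPairing_sub_insert hB.isPermInvariant a b hi]
  refine hB.dirichlet_self_nonneg (fun j => ?_) (vsub_mem_vectorSpan R ha hb)
  obtain hj | hj := piecewise_const_eq_or s a b (i.succAbove j) <;> rwa [Fin.removeNth_apply, hj]

theorem aubinI_nonneg (hB : IsHodgeForm B F) (ha : a ∈ F) (hb : b ∈ F) : 0 ≤ aubinI B a b := by
  rw [aubinI_eq_mixedPairing_sub, sub_nonneg]
  exact hB.antitone_mixedPairing ha hb (empty_subset univ)

theorem dirichlet_le_aubinI (hB : IsHodgeForm B F) (ha : a ∈ F) (hb : b ∈ F) {g : Fin m → W}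
    (hg : ∀ i, g i = a ∨ g i = b) : dirichlet B g (a - b) (a - b) ≤ aubinI B a b := by
  classical
  let s : Finset (Fin (m + 1)) := {i | i ≠ 0 ∧ (Fin.cons b g : Fin (m + 1) → W) i = a}
  have hs : (0 : Fin (m + 1)).removeNth (s.piecewise (fun _ => a) fun _ => b) = g := by
    ext i
    obtain hi | hi := hg i <;> simp +contextual [s, Fin.tail, Finset.piecewise, hi, eq_comm]
  have h_drop := mixedPairing_sub_insert hB.isPermInvariant a b (s := s) (i := 0) (by simp [s])
  rw [hs] at h_drop
  rw [← h_drop, aubinI_eq_mixedPairing_sub]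
  have h_anti := hB.antitone_mixedPairing ha hb
  exact sub_le_sub (h_anti (empty_subset s)) (h_anti (subset_univ _))

end IsHodgeForm

theorem aubinI_le_mul [IsStrictOrderedRing R] {B : MultilinearMap R (fun _ : Fin (m + 2) => W) R}
    (hB : IsPermInvariant B) {φ ψ : W} {A : R}
    (hA : ∀ g : Fin m → W, (∀ i, g i = φ ∨ g i = ψ) → dirichlet B g (φ - ψ) (φ - ψ) ≤ A) :
    aubinI B φ ψ ≤ (m + 1) * A := by
  have h_drop (s : Finset (Fin (m + 1))) :
      mixedPairing B φ ψ ∅ - mixedPairing B φ ψ s ≤ #s * A := by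
    induction s using Finset.induction_on with
    | empty => simp
    | insert i s hi ih =>
      have h_step := mixedPairing_sub_insert hB φ ψ hi
      have h_le := hA (i.removeNth (s.piecewise (fun _ => φ) fun _ => ψ)) fun j =>
        piecewise_const_eq_or s φ ψ (i.succAbove j)
      rw [card_insert_of_notMem hi]
      push_cast
      linarith
  simpa [aubinI_eq_mixedPairing_sub] using h_drop univ

namespace IsHodgeForm

variable [IsStrictOrderedRing R] {B : MultilinearMap R (fun _ : Fin (m + 2) => W) R} {F : Set W}
  {a b c : W} {T : R}

theorem sq_dirichlet_update_le (hB : IsHodgeForm B F) (ha : a ∈ F) (hb : b ∈ F) (hc : c ∈ F)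
    {g : Fin m → W} (hg : ∀ i, g i ∈ F) (i : Fin m) {A : R}
    (hAa : dirichlet B (Function.update g i a) (a - b) (a - b) ≤ A)
    (hAb : dirichlet B (Function.update g i b) (a - b) (a - b) ≤ A) (hAT : A ≤ T)
    (hT : ∀ h : Fin m → W, (∀ i, h i ∈ F) → dirichlet B h (b - c) (b - c) ≤ T) :
    dirichlet B (Function.update g i c) (a - b) (a - b) ^ 2 ≤ 9 * T * A := by
  have hu : a - b ∈ vectorSpan R F := vsub_mem_vectorSpan R ha hb
  have hv : b - c ∈ vectorSpan R F := vsub_mem_vectorSpan R hb hc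
  have hA : 0 ≤ A := (hB.dirichlet_self_nonneg (update_apply_mem hg ha i) hu).trans hAa
  have h_cross {x : W} (hx : x ∈ F)
      (hAx : dirichlet B (Function.update g i x) (a - b) (a - b) ≤ A) :
      dirichlet B (Function.update g i x) (a - b) (b - c) ^ 2 ≤ A * T := by
    have hgx := update_apply_mem hg hx i
    calc dirichlet B (Function.update g i x) (a - b) (b - c) ^ 2
      _ ≤ dirichlet B (Function.update g i x) (a - b) (a - b) *
            dirichlet B (Function.update g i x) (b - c) (b - c) := hB.sq_dirichlet_le hgx hu hv
      _ ≤ A * T := mul_le_mul hAx (hT _ hgx) (hB.dirichlet_self_nonneg hgx hv) hA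
  have h_diag : dirichlet B (Function.update g i b) (a - b) (a - b) ^ 2 ≤ A * T := by
    rw [sq]
    exact mul_le_mul hAb (hAb.trans hAT)
      (hB.dirichlet_self_nonneg (update_apply_mem hg hb i) hu) hA
  have h_sq_sum (p x y : R) : (p - x + y) ^ 2 ≤ 3 * (p ^ 2 + x ^ 2 + y ^ 2) := by
    nlinarith [sq_nonneg (p + x), sq_nonneg (p - y), sq_nonneg (x + y)]
  rw [dirichlet_update_third hB.isPermInvariant]
  linarith [h_sq_sum (dirichlet B (Function.update g i b) (a - b) (a - b))
    (dirichlet B (Function.update g i a) (a - b) (b - c))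
    (dirichlet B (Function.update g i b) (a - b) (b - c)), h_cross ha hAa, h_cross hb hAb]

theorem exists_sq_dirichlet_le (hB : IsHodgeForm B F) (ha : a ∈ F) (hb : b ∈ F) (hc : c ∈ F)
    (hF : F ⊆ {a, b, c})
    (hTab : ∀ g : Fin m → W, (∀ i, g i ∈ F) → dirichlet B g (a - b) (a - b) ≤ T)
    (hTbc : ∀ g : Fin m → W, (∀ i, g i ∈ F) → dirichlet B g (b - c) (b - c) ≤ T)
    {g : Fin m → W} (hg : ∀ i, g i ∈ F) (i : Fin m) :
    ∃ x, (x = a ∨ x = b) ∧ dirichlet B g (a - b) (a - b) ^ 2 ≤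
      9 * T * dirichlet B (Function.update g i x) (a - b) (a - b) := by
  have h_unchanged : dirichlet B g (a - b) (a - b) ^ 2 ≤
      9 * T * dirichlet B (Function.update g i (g i)) (a - b) (a - b) := by
    have h_nonneg : 0 ≤ dirichlet B g (a - b) (a - b) :=
      hB.dirichlet_self_nonneg hg (vsub_mem_vectorSpan R ha hb)
    rw [Function.update_eq_self, sq]
    exact mul_le_mul_of_nonneg_right (by linarith [hTab g hg]) h_nonneg
  obtain hi | hi | hi := hF (hg i)
  · exact ⟨a, .inl rfl, hi ▸ h_unchanged⟩
  · exact ⟨b, .inr rfl, hi ▸ h_unchanged⟩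
  · rw [← Function.update_eq_self i g, show g i = c from hi]
    simp only [Function.update_idem]
    obtain hle | hle := le_total (dirichlet B (Function.update g i a) (a - b) (a - b))
      (dirichlet B (Function.update g i b) (a - b) (a - b))
    · exact ⟨b, .inr rfl, hB.sq_dirichlet_update_le ha hb hc hg i hle le_rfl
        (hTab _ (update_apply_mem hg hb i)) hTbc⟩
    · exact ⟨a, .inl rfl, hB.sq_dirichlet_update_le ha hb hc hg i le_rfl hle
        (hTab _ (update_apply_mem hg ha i)) hTbc⟩

theorem pow_dirichlet_mul_le (hB : IsHodgeForm B F) (ha : a ∈ F) (hb : b ∈ F) (hc : c ∈ F)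
    (hF : F ⊆ {a, b, c})
    (hTab : ∀ g : Fin m → W, (∀ i, g i ∈ F) → dirichlet B g (a - b) (a - b) ≤ T)
    (hTbc : ∀ g : Fin m → W, (∀ i, g i ∈ F) → dirichlet B g (b - c) (b - c) ≤ T)
    (s : Finset (Fin m)) {g : Fin m → W} (hg : ∀ i, g i ∈ F) (hgs : ∀ i ∉ s, g i = a ∨ g i = b) :
    dirichlet B g (a - b) (a - b) ^ 2 ^ #s * (9 * T) ≤ (9 * T) ^ 2 ^ #s * aubinI B a b := by
  have hT : 0 ≤ 9 * T := by
    have h_nonneg : 0 ≤ dirichlet B g (a - b) (a - b) :=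
      hB.dirichlet_self_nonneg hg (vsub_mem_vectorSpan R ha hb)
    linarith [hTab g hg]
  induction s using Finset.induction_on generalizing g with
  | empty =>
    simpa [mul_comm] using
      mul_le_mul_of_nonneg_left (hB.dirichlet_le_aubinI ha hb fun i => hgs i (notMem_empty i)) hT
  | insert i s hi ih =>
    obtain ⟨x, hx, h_sq⟩ := hB.exists_sq_dirichlet_le ha hb hc hF hTab hTbc hg i
    have hxF : x ∈ F := by rcases hx with rfl | rfl <;> assumption
    have h_ih := ih (update_apply_mem hg hxF i) fun j hj => by
      obtain rfl | hji := eq_or_ne j i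
      · simpa using hx
      · simpa [hji] using hgs j (by simp [hji, hj])
    rw [card_insert_of_notMem hi, pow_succ', pow_mul, pow_mul]
    set P := dirichlet B g (a - b) (a - b)
    set P' := dirichlet B (Function.update g i x) (a - b) (a - b)
    calc (P ^ 2) ^ 2 ^ #s * (9 * T)
      _ ≤ (9 * T * P') ^ 2 ^ #s * (9 * T) := by gcongr
      _ = (9 * T) ^ 2 ^ #s * (P' ^ 2 ^ #s * (9 * T)) := by ring
      _ ≤ (9 * T) ^ 2 ^ #s * ((9 * T) ^ 2 ^ #s * aubinI B a b) := by gcongr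
      _ = ((9 * T) ^ 2) ^ 2 ^ #s * aubinI B a b := by
        rw [← mul_assoc, ← mul_pow, ← sq]

theorem dirichlet_le_max_aubinI (hB : IsHodgeForm B {a, b, c}) {g : Fin m → W}
    (hg : ∀ i, g i ∈ ({a, b, c} : Set W)) :
    max (dirichlet B g (a - b) (a - b)) (dirichlet B g (b - c) (b - c)) ≤
      9 ^ 2 ^ m * max (aubinI B a b) (aubinI B b c) := by
  let E (h : Fin m → W) : R :=
    max (dirichlet B h (a - b) (a - b)) (dirichlet B h (b - c) (b - c))
  have ha : a ∈ ({a, b, c} : Set W) := by simp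
  have hb : b ∈ ({a, b, c} : Set W) := by simp
  have hc : c ∈ ({a, b, c} : Set W) := by simp
  obtain ⟨g₀, hg₀, h_max⟩ := Set.exists_max_image {h : Fin m → W | ∀ i, h i ∈ ({a, b, c} : Set W)}
    E (Set.Finite.pi' fun _ => Set.toFinite _) ⟨g, hg⟩
  have hab (h : Fin m → W) (hh : ∀ i, h i ∈ ({a, b, c} : Set W)) :
      dirichlet B h (a - b) (a - b) ≤ E g₀ := (le_max_left _ _).trans (h_max h hh)
  have hbc (h : Fin m → W) (hh : ∀ i, h i ∈ ({a, b, c} : Set W)) :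
      dirichlet B h (b - c) (b - c) ≤ E g₀ := (le_max_right _ _).trans (h_max h hh)
  have hE : 0 ≤ E g₀ :=
    (hB.dirichlet_self_nonneg hg₀ (vsub_mem_vectorSpan R ha hb)).trans (hab g₀ hg₀)
  have hI : 0 ≤ max (aubinI B a b) (aubinI B b c) :=
    (hB.aubinI_nonneg ha hb).trans (le_max_left _ _)
  refine (h_max g hg).trans (le_pow_mul_of_pow_mul_le hE hI (by norm_num) ?_)
  obtain h_eq | h_eq := max_choice (dirichlet B g₀ (a - b) (a - b)) (dirichlet B g₀ (b - c) (b - c))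
  · have h_pow := hB.pow_dirichlet_mul_le ha hb hc subset_rfl hab hbc univ hg₀ (by simp)
    rw [← h_eq, card_univ, Fintype.card_fin] at h_pow
    exact h_pow.trans (by gcongr; exact le_max_left _ _)
  · have h_pow := hB.pow_dirichlet_mul_le hc hb ha (by simp [Set.insert_subset_iff])
      (by simpa only [dirichlet_sub_comm _ c b] using hbc)
      (by simpa only [dirichlet_sub_comm _ b a] using hab) univ hg₀ (by simp)
    rw [dirichlet_sub_comm, aubinI_comm, ← h_eq, card_univ, Fintype.card_fin] at h_pow
    exact h_pow.trans (by gcongr; exact le_max_right _ _)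

end IsHodgeForm

end HodgeForm

theorem MASetup.isHodgeForm {m : ℕ} {W : Type*} [AddCommGroup W] [Module ℝ W] (S : MASetup m W) :
    IsHodgeForm S.B S.F where
  isPermInvariant := S.symm
  apply_cons_cons_nonpos u hu := by
    refine S.hodge u (Submodule.span_mono ?_ hu)
    rintro _ ⟨φ, hφ, ψ, hψ, rfl⟩
    exact .inl ⟨φ, hφ, ψ, hψ, rfl⟩

theorem Ifun_quasi_triangle_general {R W : Type*} [CommRing R] [LinearOrder R]
    [IsStrictOrderedRing R] [AddCommGroup W] [Module R W] {m : ℕ}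
    {B : MultilinearMap R (fun _ : Fin (m + 2) => W) R} {F : Set W} (hB : IsHodgeForm B F)
    {a b c : W} (ha : a ∈ F) (hb : b ∈ F) (hc : c ∈ F) :
    aubinI B a c ≤ 4 * (m + 1) * 9 ^ 2 ^ m * max (aubinI B a b) (aubinI B b c) := by
  have hB' : IsHodgeForm B {a, b, c} := hB.mono (by simp [Set.insert_subset_iff, ha, hb, hc])
  have hu : a - b ∈ vectorSpan R {a, b, c} := vsub_mem_vectorSpan R (by simp) (by simp)
  have hv : b - c ∈ vectorSpan R {a, b, c} := vsub_mem_vectorSpan R (by simp) (by simp)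
  have h_dirichlet (g : Fin m → W) (hg : ∀ i, g i = a ∨ g i = c) :
      dirichlet B g (a - c) (a - c) ≤
        4 * (9 ^ 2 ^ m * max (aubinI B a b) (aubinI B b c)) := by
    have hg' (i : Fin m) : g i ∈ ({a, b, c} : Set W) := (hg i).imp_right .inr
    have h_add := hB'.dirichlet_add_self_le hg' hu hv
    rw [sub_add_sub_cancel] at h_add
    obtain ⟨hab, hbc⟩ := max_le_iff.1 (hB'.dirichlet_le_max_aubinI hg')
    linarith
  calc aubinI B a c
    _ ≤ (m + 1) * (4 * (9 ^ 2 ^ m * max (aubinI B a b) (aubinI B b c))) :=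
      aubinI_le_mul hB.isPermInvariant h_dirichlet
    _ = 4 * (m + 1) * 9 ^ 2 ^ m * max (aubinI B a b) (aubinI B b c) := by ring

/-- quasi-triangle inequality for `I`: there is `C > 0` depending
only on `n = m + 1` such that `I(φ₁, φ₃) ≤ C max{I(φ₁, φ₂), I(φ₂, φ₃)}`. -/
theorem Ifun_quasi_triangle (m : ℕ) :
    ∃ C : ℝ, 0 < C ∧
      ∀ (W : Type*) [AddCommGroup W] [Module ℝ W] (S : MASetup m W),
        ∀ φ₁ ∈ S.F, ∀ φ₂ ∈ S.F, ∀ φ₃ ∈ S.F,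
          S.Ifun φ₁ φ₃ ≤ C * max (S.Ifun φ₁ φ₂) (S.Ifun φ₂ φ₃) := by
  refine ⟨4 * (m + 1) * 9 ^ 2 ^ m, by positivity, ?_⟩
  intro W _ _ S φ₁ h₁ φ₂ h₂ φ₃ h₃
  exact Ifun_quasi_triangle_general S.isHodgeForm h₁ h₂ h₃
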